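/- Suppose F is submodular on large sets, i.e. F(X ∩ Y) + F(X ∪ Y) ≤ F(X) + F(Y) for all X, Y ⊆ Fin m with |X ∩ Y| ≥ n. Then the basecondary function 𝓑_F becomes convex upon adding a sufficiently large multiple of the support function of the secondary polytope: there exists C₀ ≥ 0 such that for every C ≥ C₀ the function λ ↦ 𝓑_F(λ) + C·Sec(λ) is convex on ℝ^m. -/

import Mathlib

open MeasureTheory

/-- The `n`-dimensional lattice volume of the convex hull of a set in `ℝⁿ`:
`n!` times its Lebesgue measure. -/
noncomputable def latticeVol (n : ℕ) (s : Set (Fin n → ℝ)) : ℝ :=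
  (n.factorial : ℝ) * (volume (convexHull ℝ s)).toReal

/-- The term `T(λ,γ)` of the basecondary function. -/
noncomputable def Tterm {n m : ℕ} (A : Fin m → (Fin n → ℝ)) (F : Finset (Fin m) → ℝ)
    (lam : Fin m → ℝ) (γ : (Fin n → ℝ) →ᵃ[ℝ] ℝ) : ℝ :=
  γ 0 *
    (F (Finset.univ.filter fun i => 0 ≤ lam i - γ (A i)) -
      F (Finset.univ.filter fun i => 0 < lam i - γ (A i))) *
    latticeVol n (A '' {i | ∀ j, lam j - γ (A j) ≤ lam i - γ (A i)})

/-- The basecondary function `𝓑_F(λ) = Σ_γ T(λ,γ)`, a finitely supported sum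
over all affine maps `γ : ℝⁿ → ℝ`. -/
noncomputable def basecondary {n m : ℕ} (A : Fin m → (Fin n → ℝ))
    (F : Finset (Fin m) → ℝ) (lam : Fin m → ℝ) : ℝ :=
  ∑ᶠ γ : (Fin n → ℝ) →ᵃ[ℝ] ℝ, Tterm A F lam γ

/-- The upper envelope `g_λ` of the configuration `{(A i, λ i)}` lifted to `ℝⁿ × ℝ`. -/
noncomputable def upperEnv {n m : ℕ} (A : Fin m → (Fin n → ℝ)) (lam : Fin m → ℝ)
    (x : Fin n → ℝ) : ℝ :=
  sSup {t : ℝ | (x, t) ∈ convexHull ℝ (Set.range fun i => (A i, lam i))}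

/-- `Sec(λ) = ∫_{conv A(Fin m)} g_λ`: up to a positive constant factor, the support
function of the secondary polytope of the configuration `A (Fin m)`. -/
noncomputable def secondarySupport {n m : ℕ} (A : Fin m → (Fin n → ℝ))
    (lam : Fin m → ℝ) : ℝ :=
  ∫ x in convexHull ℝ (Set.range A), upperEnv A lam x

/-!
The simplices with vertices in the configuration cut its convex hull into finitely many chambers,
up to a null set. On a chamber `Θ` the upper envelope is the affine interpolant of `λ` on an upper
simplex of `Θ`, and only the affine maps `γ` parallel to it have `Θ` in the convex hull of the
points where `λ - γ ∘ A` is maximal. Summing over these `γ` turns the contribution of `Θ` to `𝓑_F`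
into a positive multiple of `γ 0 * (F univ - F ∅)`, for the interpolant `γ`, plus the Lovász
extension of `F` at the heights of the lifted points above it.

For an upper simplex `σ` those heights are nonpositive and vanish at the vertices of `σ`, so `F`
may be replaced by `X ↦ F (X ∪ σ)`. This set function is submodular, hence its Lovász extension is
convex, and every simplex `σ` of `Θ`, upper or not, yields a convex function of `λ`. An upper
simplex attains the largest interpolant on `Θ`. The gap to another simplex `σ` integrates to a
positive combination of the heights of the upper hull above the lifted vertices of `σ`, and these
heights also bound the difference of the Lovász terms, which are Lipschitz. So for large `C` the
contribution of `Θ` is the pointwise maximum of convex functions, one for each simplex of `Θ`.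
-/

section Convexity

variable {V : Type*}

lemma convexOn_of_isGreatest [AddCommGroup V] [Module ℝ V] {κ : Type*} {I : Set κ}
    {f : κ → V → ℝ} {g : V → ℝ} {s : Set V} (hs : Convex ℝ s)
    (hf : ∀ k ∈ I, ConvexOn ℝ s (f k))
    (hg : ∀ x ∈ s, IsGreatest ((fun k => f k x) '' I) (g x)) : ConvexOn ℝ s g := by
  refine ⟨hs, fun x hx y hy a b ha hb hab => ?_⟩
  obtain ⟨k, hk, hgk⟩ := (hg _ (hs hx hy ha hb hab)).1
  have le_g : ∀ z ∈ s, f k z ≤ g z := fun z hz => (hg z hz).2 ⟨k, hk, rfl⟩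
  calc g (a • x + b • y) = f k (a • x + b • y) := hgk.symm
    _ ≤ a • f k x + b • f k y := (hf k hk).2 hx hy ha hb hab
    _ ≤ a • g x + b • g y := by gcongr <;> exact le_g _ ‹_›

lemma convexOn_finset_sum [AddCommGroup V] [Module ℝ V] {κ : Type*} {t : Finset κ}
    {f : κ → V → ℝ} {s : Set V} (hs : Convex ℝ s) (hf : ∀ k ∈ t, ConvexOn ℝ s (f k)) :
    ConvexOn ℝ s fun x => ∑ k ∈ t, f k x := by
  refine ⟨hs, fun x hx y hy a b ha hb hab => ?_⟩
  simp only [Finset.smul_sum, ← Finset.sum_add_distrib]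
  exact Finset.sum_le_sum fun k hk => (hf k hk).2 hx hy ha hb hab

lemma exists_lipschitzWith_of_convexOn_of_map_smul [NormedAddCommGroup V] [NormedSpace ℝ V]
    [FiniteDimensional ℝ V] {f : V → ℝ} (hf : ConvexOn ℝ Set.univ f)
    (hsmul : ∀ c : ℝ, 0 < c → ∀ x, f (c • x) = c * f x) : ∃ K, LipschitzWith K f := by
  obtain ⟨K, s, hs, hK⟩ := hf.locallyLipschitz 0
  refine ⟨K, LipschitzWith.of_dist_le_mul fun x y => ?_⟩
  have eventually_mem : ∀ z : V, ∀ᶠ c : ℝ in nhdsWithin 0 (Set.Ioi 0), c • z ∈ s := fun z =>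
    Filter.Tendsto.eventually_mem
      (((continuous_id.smul continuous_const).tendsto' 0 0 (zero_smul ℝ z)).mono_left
        nhdsWithin_le_nhds) hs
  obtain ⟨c, hx, hy, hc⟩ :=
    ((eventually_mem x).and ((eventually_mem y).and self_mem_nhdsWithin)).exists
  have hc : 0 < c := hc
  have scaled := hK.dist_le_mul _ hx _ hy
  rw [hsmul c hc, hsmul c hc, ← smul_eq_mul, ← smul_eq_mul, dist_smul₀, dist_smul₀,
    Real.norm_of_nonneg hc.le, mul_left_comm] at scaled
  exact le_of_mul_le_mul_left scaled hc

end Convexity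

section LovaszExtension

open Finset

variable {ι : Type*} [Fintype ι] {L : Type*} [LinearOrder L]

/-- Submodularity of a set function. -/
def IsSubmodular [DecidableEq ι] (F : Finset ι → ℝ) : Prop :=
  ∀ X Y, F (X ∩ Y) + F (X ∪ Y) ≤ F X + F Y

/-- The Lovász extension of a set function `F`, written as a sum over the values of `v`. It is
the Choquet integral of `v` with respect to `F - F ∅`. -/
noncomputable def lovaszExtension (F : Finset ι → ℝ) (v : ι → ℝ) : ℝ :=
  ∑ c ∈ univ.image v, c * (F {i | c ≤ v i} - F {i | c < v i})

/-- The vector of increments of `F` along the maximal chain of sets obtained by adding the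
elements of `ι` in the order of increasing `p`. -/
def greedyVector (p : ι → L) (F : Finset ι → ℝ) (i : ι) : ℝ :=
  F {j | p j ≤ p i} - F {j | p j < p i}

/-- `S` is an initial segment of `ι` for the preorder pulled back along `p`. -/
def IsInitialSegment (p : ι → L) (S : Finset ι) : Prop :=
  ∀ i ∈ S, ∀ j, p j ≤ p i → j ∈ S

variable {p : ι → L} {F : Finset ι → ℝ} {v : ι → ℝ}

lemma isInitialSegment_univ : IsInitialSegment p univ := fun _ _ j _ => mem_univ j

lemma isInitialSegment_superlevel (hv : ∀ i j, p i ≤ p j → v j ≤ v i) (c : ℝ) :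
    IsInitialSegment p {i | c ≤ v i} := by
  simp only [IsInitialSegment, mem_filter_univ]
  exact fun i hi j hji => hi.trans (hv j i hji)

lemma isInitialSegment_strictSuperlevel (hv : ∀ i j, p i ≤ p j → v j ≤ v i) (c : ℝ) :
    IsInitialSegment p {i | c < v i} := by
  simp only [IsInitialSegment, mem_filter_univ]
  exact fun i hi j hji => hi.trans_le (hv j i hji)

lemma filter_le_eq_insert_filter_lt [DecidableEq ι] (hp : p.Injective) (a : ι) :
    ({j | p j ≤ p a} : Finset ι) = insert a ({j | p j < p a} : Finset ι) := by
  ext j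
  simp only [mem_filter_univ, mem_insert, le_iff_eq_or_lt, hp.eq_iff]

lemma sum_filter_le_eq_add (hp : p.Injective) (y : ι → ℝ) (a : ι) :
    ∑ i with p i ≤ p a, y i = y a + ∑ i with p i < p a, y i := by
  classical
  rw [filter_le_eq_insert_filter_lt hp, sum_insert (by simp)]

lemma IsInitialSegment.induction (hp : p.Injective) {motive : Finset ι → Prop}
    (empty : motive ∅) (filter_le : ∀ a, motive {j | p j < p a} → motive {j | p j ≤ p a})
    {S : Finset ι} (hS : IsInitialSegment p S) : motive S := by
  classical
  induction S using Finset.induction_on_max_value p with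
  | empty => exact empty
  | insert a s ha hmax ih =>
    have lt_of_mem : ∀ j ∈ s, p j < p a := fun j hj =>
      (hmax j hj).lt_of_ne fun h => ha (hp h ▸ hj)
    have eq_filter_lt : s = ({j | p j < p a} : Finset ι) := by
      ext j
      refine ⟨fun hj => by simpa using lt_of_mem j hj, fun hj => ?_⟩
      have hj : p j < p a := by simpa using hj
      exact mem_of_mem_insert_of_ne (hS a (mem_insert_self a s) j hj.le) fun h => (h ▸ hj).false
    have initial_s : IsInitialSegment p s := fun i hi j hji => by
      rw [eq_filter_lt, mem_filter_univ]
      exact hji.trans_lt (lt_of_mem i hi)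
    rw [eq_filter_lt, ← filter_le_eq_insert_filter_lt hp]
    exact filter_le a (eq_filter_lt ▸ ih initial_s)

lemma sum_greedyVector_eq (hp : p.Injective) (F : Finset ι → ℝ) {S : Finset ι}
    (hS : IsInitialSegment p S) : ∑ i ∈ S, greedyVector p F i = F S - F ∅ := by
  refine hS.induction hp (motive := fun S => ∑ i ∈ S, greedyVector p F i = F S - F ∅) (by simp)
    fun a ih => ?_
  rw [sum_filter_le_eq_add hp, ih, greedyVector]
  ring

lemma sum_greedyVector_le [DecidableEq ι] (hp : p.Injective) (hF : IsSubmodular F)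
    (S : Finset ι) : ∑ i ∈ S, greedyVector p F i ≤ F S - F ∅ := by
  induction S using Finset.induction_on_max_value p with
  | empty => simp
  | insert a s ha hmax ih =>
    have lt_of_mem : ∀ j ∈ s, p j < p a := fun j hj =>
      (hmax j hj).lt_of_ne fun h => ha (hp h ▸ hj)
    have s_subset : s ⊆ ({j | p j < p a} : Finset ι) := fun j hj => by
      simpa using lt_of_mem j hj
    have inter_eq : insert a s ∩ ({j | p j < p a} : Finset ι) = s := by
      rw [insert_inter_of_notMem (by simp), inter_eq_left.2 s_subset]
    have union_eq : insert a s ∪ ({j | p j < p a} : Finset ι) =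
        ({j | p j ≤ p a} : Finset ι) := by
      rw [insert_union, union_eq_right.2 s_subset, filter_le_eq_insert_filter_lt hp]
    have submod := hF (insert a s) {j | p j < p a}
    rw [inter_eq, union_eq] at submod
    rw [sum_insert ha, greedyVector]
    linarith

-- Abel summation; the induction uses the claim with `c` the value of `w` at the last element.
lemma mul_sum_le_sum_mul_of_isInitialSegment (hp : p.Injective) {w z : ι → ℝ}
    (hw : ∀ i j, p i ≤ p j → w j ≤ w i)
    (hz : ∀ S, IsInitialSegment p S → 0 ≤ ∑ i ∈ S, z i) {c : ℝ} (hc : ∀ i, c ≤ w i) :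
    c * ∑ i, z i ≤ ∑ i, w i * z i := by
  refine isInitialSegment_univ.induction hp
    (motive := fun S => ∀ c, (∀ i ∈ S, c ≤ w i) → c * ∑ i ∈ S, z i ≤ ∑ i ∈ S, w i * z i)
    (by simp) (fun a ih c hc => ?_) c fun i _ => hc i
  have initial_le : IsInitialSegment p {j | p j ≤ p a} := by
    simp only [IsInitialSegment, mem_filter_univ]
    exact fun i hi j hji => hji.trans hi
  have ih_a := ih (w a) fun i hi => hw i a ((mem_filter_univ _).1 hi).le
  calc c * ∑ i with p i ≤ p a, z i ≤ w a * ∑ i with p i ≤ p a, z i :=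
        mul_le_mul_of_nonneg_right (hc a (by simp)) (hz _ initial_le)
    _ = w a * z a + w a * ∑ i with p i < p a, z i := by rw [sum_filter_le_eq_add hp, mul_add]
    _ ≤ w a * z a + ∑ i with p i < p a, w i * z i := by gcongr
    _ = ∑ i with p i ≤ p a, w i * z i := (sum_filter_le_eq_add hp (fun i => w i * z i) a).symm

lemma exists_injective_antitone_order (v : ι → ℝ) :
    ∃ p : ι → ℝᵒᵈ ×ₗ Fin (Fintype.card ι), p.Injective ∧ ∀ i j, p i ≤ p j → v j ≤ v i := by
  refine ⟨fun i => toLex (OrderDual.toDual (v i), Fintype.equivFin ι i), fun i j hij => ?_,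
    fun i j hij => ?_⟩
  · exact (Fintype.equivFin ι).injective (congrArg (fun x => (ofLex x).2) hij)
  · exact Prod.Lex.monotone_fst_ofLex hij

lemma sum_image_mul_sub_eq_sum_mul_greedyVector (hp : p.Injective)
    (hv : ∀ i j, p i ≤ p j → v j ≤ v i) (F : Finset ι → ℝ) (φ : ℝ → ℝ) :
    ∑ c ∈ univ.image v, φ c * (F {i | c ≤ v i} - F {i | c < v i}) =
      ∑ i, φ (v i) * greedyVector p F i := by
  rw [← sum_fiberwise_of_maps_to (t := univ.image v) (g := v)
    fun i _ => mem_image_of_mem v (mem_univ i)]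
  refine sum_congr rfl fun c _ => ?_
  have level_sum : ∑ i with c ≤ v i, greedyVector p F i =
      ∑ i with v i = c, greedyVector p F i + ∑ i with c < v i, greedyVector p F i := by
    classical
    rw [← sum_union (disjoint_filter.2 fun i _ hi => by simp [hi]), ← filter_or]
    simp only [le_iff_eq_or_lt, eq_comm]
  rw [sum_greedyVector_eq hp F (isInitialSegment_superlevel hv c),
    sum_greedyVector_eq hp F (isInitialSegment_strictSuperlevel hv c)] at level_sum
  calc φ c * (F {i | c ≤ v i} - F {i | c < v i})
      = ∑ i with v i = c, φ c * greedyVector p F i := by rw [← mul_sum]; congr 1; linarith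
    _ = ∑ i with v i = c, φ (v i) * greedyVector p F i :=
        sum_congr rfl fun i hi => by rw [(mem_filter_univ _).1 hi]

lemma lovaszExtension_eq_sum_mul_greedyVector (hp : p.Injective)
    (hv : ∀ i j, p i ≤ p j → v j ≤ v i) (F : Finset ι → ℝ) :
    lovaszExtension F v = ∑ i, v i * greedyVector p F i :=
  sum_image_mul_sub_eq_sum_mul_greedyVector hp hv F id

lemma sum_image_add_mul_sub_eq_lovaszExtension (F : Finset ι → ℝ) (v : ι → ℝ) (a : ℝ) :
    ∑ c ∈ univ.image v, (a + c) * (F {i | c ≤ v i} - F {i | c < v i}) =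
      a * (F univ - F ∅) + lovaszExtension F v := by
  obtain ⟨p, hp, hv⟩ := exists_injective_antitone_order v
  rw [sum_image_mul_sub_eq_sum_mul_greedyVector hp hv F (a + ·),
    lovaszExtension_eq_sum_mul_greedyVector hp hv F,
    ← sum_greedyVector_eq hp F isInitialSegment_univ]
  simp only [add_mul, sum_add_distrib, mul_sum]

lemma lovaszExtension_smul (F : Finset ι → ℝ) {c : ℝ} (hc : 0 ≤ c) (v : ι → ℝ) :
    lovaszExtension F (c • v) = c * lovaszExtension F v := by
  obtain ⟨p, hp, hv⟩ := exists_injective_antitone_order v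
  have hcv : ∀ i j, p i ≤ p j → (c • v) j ≤ (c • v) i := fun i j hij =>
    mul_le_mul_of_nonneg_left (hv i j hij) hc
  rw [lovaszExtension_eq_sum_mul_greedyVector hp hcv, lovaszExtension_eq_sum_mul_greedyVector hp hv]
  simp only [Pi.smul_apply, smul_eq_mul, mul_assoc, mul_sum]

lemma sum_mul_le_lovaszExtension {y : ι → ℝ} (hy : ∀ S, ∑ i ∈ S, y i ≤ F S - F ∅)
    (hy_univ : ∑ i, y i = F univ - F ∅) (w : ι → ℝ) : ∑ i, w i * y i ≤ lovaszExtension F w := by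
  obtain ⟨p, hp, hw⟩ := exists_injective_antitone_order w
  obtain ⟨c, hc⟩ := (Set.finite_range w).bddBelow
  have sum_nonneg : ∀ S, IsInitialSegment p S → 0 ≤ ∑ i ∈ S, (greedyVector p F i - y i) :=
    fun S hS => by rw [sum_sub_distrib, sum_greedyVector_eq hp F hS]; linarith [hy S]
  have abel := mul_sum_le_sum_mul_of_isInitialSegment hp hw sum_nonneg fun i => hc ⟨i, rfl⟩
  rw [sum_sub_distrib, sum_greedyVector_eq hp F isInitialSegment_univ, hy_univ, sub_self,
    mul_zero] at abel
  simp only [mul_sub, sum_sub_distrib] at abel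
  rw [lovaszExtension_eq_sum_mul_greedyVector hp hw]
  linarith

lemma IsSubmodular.convexOn_lovaszExtension [DecidableEq ι] (hF : IsSubmodular F) :
    ConvexOn ℝ Set.univ (lovaszExtension F) := by
  -- The Lovász extension is the support function of the base polytope.
  refine convexOn_of_isGreatest
    (I := {y : ι → ℝ | (∀ S, ∑ i ∈ S, y i ≤ F S - F ∅) ∧ ∑ i, y i = F univ - F ∅})
    (f := fun y v => Fintype.linearCombination ℝ y v) convex_univ
    (fun y _ => (Fintype.linearCombination ℝ y).convexOn convex_univ) fun v _ => ⟨?_, ?_⟩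
  · obtain ⟨p, hp, hv⟩ := exists_injective_antitone_order v
    exact ⟨greedyVector p F,
      ⟨sum_greedyVector_le hp hF, sum_greedyVector_eq hp F isInitialSegment_univ⟩,
      (lovaszExtension_eq_sum_mul_greedyVector hp hv F).symm⟩
  · rintro _ ⟨y, ⟨hy, hy_univ⟩, rfl⟩
    exact sum_mul_le_lovaszExtension hy hy_univ v

lemma lovaszExtension_union_eq_of_nonpos [DecidableEq ι] (F : Finset ι → ℝ) {S : Finset ι}
    (hv : ∀ i, v i ≤ 0) (hS : ∀ i ∈ S, v i = 0) :
    lovaszExtension (fun X => F (X ∪ S)) v = lovaszExtension F v := by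
  refine sum_congr rfl fun c hc => ?_
  obtain ⟨j, -, rfl⟩ := mem_image.1 hc
  obtain hj | hj := (hv j).lt_or_eq
  · have subset_le : S ⊆ ({i | v j ≤ v i} : Finset ι) := fun i hi => by simp [hS i hi, hj.le]
    have subset_lt : S ⊆ ({i | v j < v i} : Finset ι) := fun i hi => by simp [hS i hi, hj]
    simp only [union_eq_left.2 subset_le, union_eq_left.2 subset_lt]
  · simp only [hj, zero_mul]

end LovaszExtension

section Simplices

open Module Finset

lemma finrank_lt_card_of_affineSpan_image_eq_top {ι E : Type*} [AddCommGroup E] [Module ℝ E]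
    {A : ι → E} {S : Finset ι} (hS : affineSpan ℝ (A '' S) = ⊤) : finrank ℝ E < #S := by
  classical
  have nonempty : S.Nonempty := by
    rw [nonempty_iff_ne_empty]
    rintro rfl
    simp at hS
  obtain ⟨d, hd⟩ := Nat.exists_eq_add_one.2 nonempty.card_pos
  have finrank_le := finrank_vectorSpan_image_finset_le ℝ A S hd
  rw [coe_image, AffineSubspace.vectorSpan_eq_top_of_affineSpan_eq_top ℝ E E hS,
    finrank_top] at finrank_le
  lia

lemma sum_update_smul_update {κ ι M : Type*} [Fintype κ] [DecidableEq κ] [AddCommGroup M]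
    [Module ℝ M] {a : κ → ℝ} {k₀ : κ} (hk₀ : a k₀ = 0) (v : κ → ι) (ε : ℝ) (j : ι) (f : ι → M) :
    ∑ k, Function.update a k₀ ε k • f (Function.update v k₀ j k) =
      ∑ k, a k • f (v k) + ε • f j := by
  rw [← add_sum_erase _ _ (mem_univ k₀),
    ← add_sum_erase univ (fun k => a k • f (v k)) (mem_univ k₀)]
  simp only [Function.update_self, hk₀, zero_smul, zero_add]
  rw [add_comm]
  congr 1
  refine sum_congr rfl fun k hk => ?_
  simp only [Function.update_of_ne (ne_of_mem_erase hk)]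

lemma exists_sub_mul_eq_zero {κ : Type*} [Finite κ] {a q : κ → ℝ} (ha : ∀ k, 0 < a k)
    (hq : ∃ k, 0 < q k) : ∃ ε > 0, (∀ k, 0 ≤ a k - ε * q k) ∧ ∃ k, a k - ε * q k = 0 := by
  obtain ⟨k₀, hk₀, ratio_min⟩ :=
    Set.exists_min_image {k | 0 < q k} (fun k => a k / q k) (Set.toFinite _) hq
  refine ⟨a k₀ / q k₀, div_pos (ha k₀) hk₀, fun k => sub_nonneg.2 ?_, k₀,
    sub_eq_zero.2 (div_mul_cancel₀ _ (ne_of_gt hk₀)).symm⟩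
  obtain hqk | hqk := le_or_gt (q k) 0
  · exact (mul_nonpos_of_nonneg_of_nonpos (div_pos (ha k₀) hk₀).le hqk).trans (ha k).le
  · exact (le_div_iff₀ hqk).1 (ratio_min k hqk)

variable {ι E : Type*} [AddCommGroup E] [Module ℝ E]

/-- A full-dimensional simplex with vertices in the point configuration `A`, given by an
ordered list of indices. -/
structure FullSimplex (A : ι → E) where
  vertex : Fin (finrank ℝ E + 1) → ι
  affineIndependent : AffineIndependent ℝ (A ∘ vertex)

/-- `x` is generic with respect to the configuration `A` if it avoids all proper affine subspaces
spanned by points of `A`. -/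
def IsGeneric (A : ι → E) (x : E) : Prop :=
  ∀ S : Set ι, x ∈ affineSpan ℝ (A '' S) → affineSpan ℝ (A '' S) = ⊤

namespace FullSimplex

variable {A : ι → E}

instance [Finite ι] : Finite (FullSimplex A) :=
  Finite.of_injective vertex fun σ τ h => by cases σ; cases τ; cases h; rfl

noncomputable instance [Finite ι] : Fintype (FullSimplex A) := Fintype.ofFinite _

/-- The set of vertices of `σ`. -/
noncomputable def vertices [DecidableEq ι] (σ : FullSimplex A) : Finset ι := univ.image σ.vertex

variable [FiniteDimensional ℝ E] (σ : FullSimplex A) {lam : ι → ℝ} {x : E}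

lemma affineSpan_range_eq_top : affineSpan ℝ (Set.range (A ∘ σ.vertex)) = ⊤ :=
  σ.affineIndependent.affineSpan_eq_top_iff_card_eq_finrank_add_one.2 (Fintype.card_fin _)

/-- The affine basis of the vertices of `σ`, defining barycentric coordinates. -/
noncomputable def basis : AffineBasis (Fin (finrank ℝ E + 1)) ℝ E :=
  ⟨A ∘ σ.vertex, σ.affineIndependent, σ.affineSpan_range_eq_top⟩

/-- The open simplex spanned by the vertices of `σ`. -/
def openSimplex : Set E := {x | ∀ k, 0 < σ.basis.coord k x}

/-- The affine function with value `lam i` at each vertex `A i` of `σ`. -/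
noncomputable def interp : (ι → ℝ) →ₗ[ℝ] (E →ᵃ[ℝ] ℝ) where
  toFun lam := (Fintype.linearCombination ℝ (lam ∘ σ.vertex)).toAffineMap.comp σ.basis.coords
  map_add' lam lam' := by
    ext x
    simp [Fintype.linearCombination_apply, mul_add, sum_add_distrib]
  map_smul' c lam := by
    ext x
    simp [Fintype.linearCombination_apply, mul_sum, mul_left_comm]

/-- `σ` is the projection of a simplex in the upper hull of the lifted configuration. -/
def IsUpper (lam : ι → ℝ) : Prop := ∀ i, lam i ≤ σ.interp lam (A i)

lemma interp_apply (lam : ι → ℝ) (x : E) :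
    σ.interp lam x = ∑ k, σ.basis.coord k x * lam (σ.vertex k) := by
  simp [interp, Fintype.linearCombination_apply]

lemma interp_apply_vertex (lam : ι → ℝ) (k : Fin (finrank ℝ E + 1)) :
    σ.interp lam (A (σ.vertex k)) = lam (σ.vertex k) := by
  have coord_vertex : ∀ l, σ.basis.coord l (A (σ.vertex k)) = if l = k then 1 else 0 :=
    fun l => σ.basis.coord_apply l k
  simp [interp_apply, coord_vertex]

lemma interp_eq_of_apply_vertex {γ : E →ᵃ[ℝ] ℝ}
    (h : ∀ k, γ (A (σ.vertex k)) = lam (σ.vertex k)) : σ.interp lam = γ := by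
  refine AffineMap.ext_on σ.affineSpan_range_eq_top ?_
  rintro _ ⟨k, rfl⟩
  exact (σ.interp_apply_vertex lam k).trans (h k).symm

lemma interp_comp (γ : E →ᵃ[ℝ] ℝ) : σ.interp (γ ∘ A) = γ :=
  σ.interp_eq_of_apply_vertex fun _ => rfl

lemma sum_coord_smul_vertex (x : E) : ∑ k, σ.basis.coord k x • A (σ.vertex k) = x :=
  σ.basis.linear_combination_coord_eq_self x

variable {σ}

lemma eq_of_mem_openSimplex {γ γ' : E →ᵃ[ℝ] ℝ} (hx : x ∈ σ.openSimplex)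
    (hle : ∀ k, γ (A (σ.vertex k)) ≤ γ' (A (σ.vertex k))) (hge : γ' x ≤ γ x) : γ = γ' := by
  rw [← σ.interp_comp γ, ← σ.interp_comp γ', interp_apply, interp_apply] at hge
  have coord_mul_le : ∀ k ∈ univ, σ.basis.coord k x * γ (A (σ.vertex k)) ≤
      σ.basis.coord k x * γ' (A (σ.vertex k)) := fun k _ =>
    mul_le_mul_of_nonneg_left (hle k) (hx k).le
  have eq := (sum_eq_sum_iff_of_le coord_mul_le).1 (hge.antisymm (sum_le_sum coord_mul_le) |>.symm)
  rw [← σ.interp_comp γ']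
  exact (σ.interp_eq_of_apply_vertex fun k =>
    mul_left_cancel₀ (hx k).ne' (eq k (mem_univ k))).symm

lemma mem_convexHull_of_mem_openSimplex (hx : x ∈ σ.openSimplex) :
    x ∈ convexHull ℝ (Set.range (A ∘ σ.vertex)) := by
  change x ∈ convexHull ℝ (Set.range σ.basis)
  rw [AffineBasis.convexHull_eq_nonneg_coord]
  exact fun k => (hx k).le

end FullSimplex

namespace IsGeneric

variable {A : ι → E} [FiniteDimensional ℝ E] {x : E}

-- Genericity forces all weights to be positive and the points to be affinely independent.
lemma exists_fullSimplex_of_sum_smul_eq (hx : IsGeneric A x) {v : Fin (finrank ℝ E + 1) → ι}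
    {w : Fin (finrank ℝ E + 1) → ℝ} (hw : ∀ k, 0 ≤ w k) (hw_sum : ∑ k, w k = 1)
    (hwx : ∑ k, w k • A (v k) = x) :
    ∃ σ : FullSimplex A, x ∈ σ.openSimplex ∧
      ∀ lam, σ.interp lam x = ∑ k, w k * lam (v k) := by
  classical
  let S : Finset (Fin (finrank ℝ E + 1)) := {k | w k ≠ 0}
  have mem_span : x ∈ affineSpan ℝ (A '' (v '' S)) := by
    rw [← hwx, ← sum_filter_of_ne fun k _ h => left_ne_zero_of_smul h]
    refine (affineSpan ℝ (A '' (v '' S))).convex.sum_mem (fun k _ => hw k)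
      (by rwa [sum_filter_ne_zero]) fun k hk => subset_affineSpan ℝ _ ?_
    exact Set.mem_image_of_mem A (Set.mem_image_of_mem v hk)
  have span_top := hx _ mem_span
  rw [← Set.image_comp] at span_top
  have S_univ : S = univ := by
    have card_lt := finrank_lt_card_of_affineSpan_image_eq_top span_top
    exact eq_univ_of_card _ (le_antisymm (card_le_univ _) (by simpa using card_lt))
  have w_pos : ∀ k, 0 < w k := fun k =>
    (hw k).lt_of_ne' ((mem_filter_univ k).1 (S_univ ▸ mem_univ k))
  rw [S_univ, coe_univ, Set.image_univ] at span_top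
  have indep : AffineIndependent ℝ (A ∘ v) := by
    rw [affineIndependent_iff_finrank_vectorSpan_eq ℝ _ (Fintype.card_fin _),
      AffineSubspace.vectorSpan_eq_top_of_affineSpan_eq_top ℝ E E span_top, finrank_top]
  let σ : FullSimplex A := ⟨v, indep⟩
  have coord_eq : ∀ k, σ.basis.coord k x = w k := fun k => by
    rw [← hwx]
    have := σ.basis.coord_apply_combination_of_mem (mem_univ k) hw_sum
    rwa [affineCombination_eq_linear_combination _ _ _ hw_sum] at this
  exact ⟨σ, fun k => (coord_eq k).symm ▸ w_pos k, fun lam => by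
    simp only [σ.interp_apply, coord_eq, σ]⟩

lemma exists_mem_openSimplex (hx : IsGeneric A x) (hx_hull : x ∈ convexHull ℝ (Set.range A)) :
    ∃ σ : FullSimplex A, x ∈ σ.openSimplex := by
  obtain ⟨κ, _, z, w, hz, indep, hw, hw_sum, hwx⟩ := eq_pos_convex_span_of_mem_convexHull hx_hull
  choose u hu using fun k => hz ⟨k, rfl⟩
  have mem_span : x ∈ affineSpan ℝ (A '' Set.range u) := by
    rw [← hwx]
    exact (affineSpan ℝ (A '' Set.range u)).convex.sum_mem (fun k _ => (hw k).le) hw_sum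
      fun k _ => subset_affineSpan ℝ _ ⟨u k, ⟨k, rfl⟩, hu k⟩
  have span_top := hx _ mem_span
  rw [← Set.range_comp, show A ∘ u = z from funext hu,
    indep.affineSpan_eq_top_iff_card_eq_finrank_add_one] at span_top
  let e := (Fintype.equivFinOfCardEq span_top).symm
  obtain ⟨σ, hσ, -⟩ := hx.exists_fullSimplex_of_sum_smul_eq (v := u ∘ e) (w := w ∘ e)
    (fun k => (hw _).le) (by simpa [e.sum_comp] using hw_sum)
    (by simpa only [Function.comp_apply, hu, e.sum_comp fun k => w k • z k] using hwx)
  exact ⟨σ, hσ⟩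

-- A simplex pivot: move the weights of `x` towards `A j` until one of them vanishes.
lemma exists_interp_lt (hx : IsGeneric A x) {σ : FullSimplex A} (hxσ : x ∈ σ.openSimplex)
    {lam : ι → ℝ} (hσ : ¬ σ.IsUpper lam) :
    ∃ τ : FullSimplex A, x ∈ τ.openSimplex ∧ σ.interp lam x < τ.interp lam x := by
  obtain ⟨j, hj⟩ := not_forall.1 hσ
  have sum_coord := σ.basis.sum_coord_apply_eq_one
  obtain ⟨k₁, -, hk₁⟩ := exists_lt_of_sum_lt (s := univ) (f := 0)
    (g := fun k => σ.basis.coord k (A j)) (by simp [sum_coord])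
  obtain ⟨ε, ε_pos, nonneg, k₀, hk₀⟩ :=
    exists_sub_mul_eq_zero (q := fun k => σ.basis.coord k (A j)) hxσ ⟨k₁, hk₁⟩
  set b := fun k => σ.basis.coord k x - ε * σ.basis.coord k (A j) with hb
  have b_k₀ : b k₀ = 0 := hk₀
  obtain ⟨τ, hxτ, interp_τ⟩ := hx.exists_fullSimplex_of_sum_smul_eq
    (v := Function.update σ.vertex k₀ j) (w := Function.update b k₀ ε)
    (fun k => by
      obtain rfl | hk := eq_or_ne k k₀
      · simpa using ε_pos.le
      · simpa only [Function.update_of_ne hk] using nonneg k)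
    (by
      have := sum_update_smul_update b_k₀ σ.vertex ε j fun _ => (1 : ℝ)
      simpa [hb, ← mul_sum, sum_coord] using this)
    (by
      rw [sum_update_smul_update b_k₀ σ.vertex ε j A]
      simp [hb, sub_smul, mul_smul, ← smul_sum, σ.sum_coord_smul_vertex])
  refine ⟨τ, hxτ, ?_⟩
  have interp_τ_eq : τ.interp lam x = σ.interp lam x + ε * (lam j - σ.interp lam (A j)) := by
    have := sum_update_smul_update b_k₀ σ.vertex ε j lam
    simp only [smul_eq_mul] at this
    rw [interp_τ, this, σ.interp_apply lam x, σ.interp_apply lam (A j)]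
    simp only [hb, sub_mul, sum_sub_distrib, mul_assoc, ← mul_sum]
    ring
  rw [interp_τ_eq]
  exact lt_add_of_pos_right _ (mul_pos ε_pos (sub_pos.2 (not_le.1 hj)))

lemma exists_isUpper [Finite ι] (hx : IsGeneric A x)
    (hx_mem : ∃ σ : FullSimplex A, x ∈ σ.openSimplex) (lam : ι → ℝ) :
    ∃ σ : FullSimplex A, x ∈ σ.openSimplex ∧ σ.IsUpper lam := by
  obtain ⟨σ, hxσ, σ_max⟩ := Set.exists_max_image {σ : FullSimplex A | x ∈ σ.openSimplex}
    (fun σ => σ.interp lam x) (Set.toFinite _) hx_mem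
  refine ⟨σ, hxσ, ?_⟩
  by_contra hσ
  obtain ⟨τ, hxτ, lt⟩ := hx.exists_interp_lt hxσ hσ
  exact (σ_max τ hxτ).not_gt lt

end IsGeneric

end Simplices

section UpperHull

open Module Finset

variable {ι E : Type*} [AddCommGroup E] [Module ℝ E]

lemma le_of_mem_convexHull {γ γ' : E →ᵃ[ℝ] ℝ} {s : Set E} (h : ∀ y ∈ s, γ y ≤ γ' y) {x : E}
    (hx : x ∈ convexHull ℝ s) : γ x ≤ γ' x := by
  have convex_le : Convex ℝ ((γ - γ') ⁻¹' Set.Iic 0) := (convex_Iic 0).affine_preimage _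
  exact sub_nonpos.1 (convexHull_min (fun y hy => sub_nonpos.2 (h y hy)) convex_le hx)

/-- The affine functions that differ from `γ` by a constant. -/
def parallels (γ : E →ᵃ[ℝ] ℝ) : Set (E →ᵃ[ℝ] ℝ) :=
  Set.range fun c : ℝ => γ + AffineMap.const ℝ E c

namespace FullSimplex

variable {A : ι → E} [FiniteDimensional ℝ E] {σ τ : FullSimplex A} {lam : ι → ℝ} {x : E}

lemma IsUpper.mem_convexHull_argmax_iff (hτ : τ.IsUpper lam) (hx : x ∈ τ.openSimplex)
    {γ : E →ᵃ[ℝ] ℝ} :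
    x ∈ convexHull ℝ (A '' {i | ∀ j, lam j - γ (A j) ≤ lam i - γ (A i)}) ↔
      γ ∈ parallels (τ.interp lam) := by
  refine ⟨fun hx_hull => ?_, ?_⟩
  · obtain ⟨_, ⟨i₀, hi₀, rfl⟩⟩ := convexHull_nonempty_iff.1 ⟨x, hx_hull⟩
    set c := lam i₀ - γ (A i₀) with hc
    have le_add : ∀ j, lam j ≤ (γ + AffineMap.const ℝ E c) (A j) := fun j => by
      simpa [hc, add_comm, sub_le_iff_le_add] using hi₀ j
    have add_le : (γ + AffineMap.const ℝ E c) x ≤ τ.interp lam x := by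
      refine le_of_mem_convexHull ?_ hx_hull
      rintro _ ⟨i, hi, rfl⟩
      have : (γ + AffineMap.const ℝ E c) (A i) ≤ lam i := by
        simpa [hc, le_sub_iff_add_le'] using hi i₀
      exact this.trans (hτ i)
    have interp_eq : τ.interp lam = γ + AffineMap.const ℝ E c :=
      eq_of_mem_openSimplex hx
        (fun k => by rw [interp_apply_vertex]; exact le_add _) add_le
    refine ⟨-c, ?_⟩
    ext y
    simp [interp_eq]
  · rintro ⟨c, rfl⟩
    refine convexHull_mono ?_ (mem_convexHull_of_mem_openSimplex hx)
    rintro _ ⟨k, rfl⟩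
    refine ⟨τ.vertex k, fun j => ?_, rfl⟩
    have := hτ j
    simp only [AffineMap.coe_add, AffineMap.coe_const, Pi.add_apply, Function.const_apply,
      interp_apply_vertex]
    linarith

lemma IsUpper.isGreatest_interp (hτ : τ.IsUpper lam) (hx : x ∈ τ.openSimplex) :
    IsGreatest {t : ℝ | (x, t) ∈ convexHull ℝ (Set.range fun i => (A i, lam i))}
      (τ.interp lam x) := by
  refine ⟨?_, fun t ht => ?_⟩
  · let graph : E →ᵃ[ℝ] E × ℝ := (AffineMap.id ℝ E).prod (τ.interp lam)
    have graph_mem : graph x ∈ graph '' convexHull ℝ (Set.range (A ∘ τ.vertex)) :=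
      Set.mem_image_of_mem _ (mem_convexHull_of_mem_openSimplex hx)
    rw [AffineMap.image_convexHull] at graph_mem
    refine convexHull_mono ?_ graph_mem
    rintro _ ⟨_, ⟨k, rfl⟩, rfl⟩
    exact ⟨τ.vertex k, Prod.ext rfl (τ.interp_apply_vertex lam k).symm⟩
  · refine le_of_mem_convexHull (γ := (LinearMap.snd ℝ E ℝ).toAffineMap)
      (γ' := (τ.interp lam).comp (LinearMap.fst ℝ E ℝ).toAffineMap) ?_ ht
    rintro _ ⟨i, rfl⟩
    exact hτ i

variable (σ) in
/-- The heights of the lifted points of the configuration above the affine function spanned by the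
lifted vertices of `σ`. -/
noncomputable def residual : (ι → ℝ) →ₗ[ℝ] (ι → ℝ) where
  toFun lam i := lam i - σ.interp lam (A i)
  map_add' lam lam' := by
    ext i
    simp only [map_add, Pi.add_apply, AffineMap.coe_add]
    ring
  map_smul' c lam := by
    ext i
    simp only [map_smul, Pi.smul_apply, AffineMap.coe_smul, RingHom.id_apply, smul_sub]

end FullSimplex

end UpperHull

section ParallelClasses

open Module Finset

variable {ι E : Type*} [Fintype ι] [AddCommGroup E] [Module ℝ E]

/-- The coefficient of the volume in the term of the basecondary function indexed by `γ`. -/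
noncomputable def levelJump (F : Finset ι → ℝ) (A : ι → E) (lam : ι → ℝ) (γ : E →ᵃ[ℝ] ℝ) : ℝ :=
  γ 0 * (F {i | 0 ≤ lam i - γ (A i)} - F {i | 0 < lam i - γ (A i)})

/-- The sum of `levelJump` over all affine functions parallel to `γ`. -/
noncomputable def parallelClassWeight (F : Finset ι → ℝ) (A : ι → E) (lam : ι → ℝ)
    (γ : E →ᵃ[ℝ] ℝ) : ℝ :=
  γ 0 * (F univ - F ∅) + lovaszExtension F fun i => lam i - γ (A i)

variable {F : Finset ι → ℝ} {A : ι → E} {lam : ι → ℝ} {γ : E →ᵃ[ℝ] ℝ}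

lemma levelJump_add_const (c : ℝ) : levelJump F A lam (γ + AffineMap.const ℝ E c) =
    (γ 0 + c) * (F {i | c ≤ lam i - γ (A i)} - F {i | c < lam i - γ (A i)}) := by
  simp [levelJump, ← sub_sub, sub_nonneg, sub_pos]

lemma support_levelJump_add_const_subset :
    (Function.support fun c : ℝ => levelJump F A lam (γ + AffineMap.const ℝ E c)) ⊆
      univ.image fun i => lam i - γ (A i) := by
  intro c hc
  contrapose! hc
  have levels_eq : ∀ i, c ≤ lam i - γ (A i) ↔ c < lam i - γ (A i) := fun i =>
    ⟨fun h => h.lt_of_ne fun h' => hc (by simp [h']), le_of_lt⟩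
  simp [levelJump_add_const, levels_eq]

lemma finsum_mem_parallels_levelJump :
    ∑ᶠ γ' ∈ parallels γ, levelJump F A lam γ' = parallelClassWeight F A lam γ := by
  have injective : Function.Injective fun c : ℝ => γ + AffineMap.const ℝ E c := fun c c' h => by
    simpa using congrArg (fun γ' : E →ᵃ[ℝ] ℝ => γ' 0) h
  rw [parallels, finsum_mem_range injective,
    finsum_eq_sum_of_support_subset _ support_levelJump_add_const_subset]
  simp only [levelJump_add_const]
  exact sum_image_add_mul_sub_eq_lovaszExtension F _ _

lemma finite_parallels_inter_support_levelJump :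
    (parallels γ ∩ Function.support (levelJump F A lam)).Finite := by
  refine ((univ.image fun i => lam i - γ (A i)).finite_toSet.image
    fun c => γ + AffineMap.const ℝ E c).subset ?_
  rintro _ ⟨⟨c, rfl⟩, hc⟩
  exact ⟨c, support_levelJump_add_const_subset hc, rfl⟩

end ParallelClasses

section SimplexPieces

open Module Finset

variable {ι E : Type*} [DecidableEq ι] [AddCommGroup E] [Module ℝ E]

/-- Submodularity of `F` on pairs of sets whose intersection affinely spans the whole space. -/
def SubmodularOnSpanning (A : ι → E) (F : Finset ι → ℝ) : Prop :=
  ∀ X Y : Finset ι, affineSpan ℝ (A '' (X ∩ Y : Finset ι)) = ⊤ →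
    F (X ∩ Y) + F (X ∪ Y) ≤ F X + F Y

namespace FullSimplex

variable [FiniteDimensional ℝ E] {A : ι → E} {σ τ : FullSimplex A} {F : Finset ι → ℝ}
  {lam : ι → ℝ}

lemma isSubmodular_union_vertices (hF : SubmodularOnSpanning A F) (σ : FullSimplex A) :
    IsSubmodular fun X => F (X ∪ σ.vertices) := by
  intro X Y
  have spanning : affineSpan ℝ (A '' ((X ∪ σ.vertices) ∩ (Y ∪ σ.vertices) : Finset ι)) = ⊤ := by
    refine top_le_iff.1 (σ.affineSpan_range_eq_top.symm.le.trans (affineSpan_mono ℝ ?_))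
    rintro _ ⟨k, rfl⟩
    exact ⟨σ.vertex k, by simp [vertices], rfl⟩
  have submod := hF _ _ spanning
  rwa [← inter_union_distrib_right, ← union_union_distrib_right] at submod

variable [Fintype ι]

variable (F σ) in
/-- The weight of the parallel class of the affine function spanned by `σ`, with the vertices of
`σ` forced into every superlevel set. For upper simplices this changes nothing, and it makes only
values of `F` on spanning sets enter. -/
noncomputable def piece (lam : ι → ℝ) : ℝ :=
  σ.interp lam 0 * (F univ - F ∅) +
    lovaszExtension (fun X => F (X ∪ σ.vertices)) (σ.residual lam)

lemma convexOn_piece (hF : SubmodularOnSpanning A F) (σ : FullSimplex A) :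
    ConvexOn ℝ Set.univ (σ.piece F) := by
  let linearPart : (ι → ℝ) →ₗ[ℝ] ℝ :=
    { toFun lam := σ.interp lam 0 * (F univ - F ∅)
      map_add' _ _ := by simp [add_mul]
      map_smul' _ _ := by simp [mul_assoc] }
  exact (linearPart.convexOn convex_univ).add
    ((isSubmodular_union_vertices hF σ).convexOn_lovaszExtension.comp_linearMap σ.residual)

lemma piece_smul {c : ℝ} (hc : 0 ≤ c) (lam : ι → ℝ) :
    σ.piece F (c • lam) = c * σ.piece F lam := by
  simp only [piece, map_smul, lovaszExtension_smul _ hc, AffineMap.coe_smul, Pi.smul_apply,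
    smul_eq_mul]
  ring

lemma IsUpper.piece_eq_parallelClassWeight (hσ : σ.IsUpper lam) :
    σ.piece F lam = parallelClassWeight F A lam (σ.interp lam) := by
  have residual_vertex : ∀ i ∈ σ.vertices, σ.residual lam i = 0 := fun i hi => by
    obtain ⟨k, -, rfl⟩ := mem_image.1 hi
    exact sub_eq_zero.2 (σ.interp_apply_vertex lam k).symm
  have residual_nonpos : ∀ i, σ.residual lam i ≤ 0 := fun i => sub_nonpos.2 (hσ i)
  rw [piece, lovaszExtension_union_eq_of_nonpos F residual_nonpos residual_vertex]
  rfl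

lemma exists_lipschitzWith_piece (hF : SubmodularOnSpanning A F) :
    ∃ K, ∀ σ : FullSimplex A, LipschitzWith K (σ.piece F) := by
  choose K hK using fun σ : FullSimplex A => exists_lipschitzWith_of_convexOn_of_map_smul
    (convexOn_piece hF σ) fun c hc => piece_smul hc.le
  exact ⟨∑ σ, K σ, fun σ => (hK σ).weaken (single_le_sum (fun _ _ => zero_le) (mem_univ σ))⟩

/- Lifting the vertices of `σ` to the affine function spanned by `τ` makes `σ` and `τ` upper
simplices with the same affine function, hence with equal pieces. -/
lemma IsUpper.exists_piece_eq_piece (hτ : τ.IsUpper lam) (F : Finset ι → ℝ) (σ : FullSimplex A) :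
    ∃ lam', σ.piece F lam' = τ.piece F lam' ∧
      dist lam lam' ≤ ∑ k, (τ.interp lam (A (σ.vertex k)) - lam (σ.vertex k)) := by
  let lam' : ι → ℝ := fun i => if i ∈ σ.vertices then τ.interp lam (A i) else lam i
  have σ_vertex_mem : ∀ k, σ.vertex k ∈ σ.vertices := fun k => mem_image_of_mem _ (mem_univ k)
  have lam'_le : ∀ i, lam' i ≤ τ.interp lam (A i) := fun i => by
    by_cases hi : i ∈ σ.vertices <;> simp [lam', hi, hτ i]
  have interp_σ : σ.interp lam' = τ.interp lam :=
    σ.interp_eq_of_apply_vertex fun k => (if_pos (σ_vertex_mem k)).symm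
  have interp_τ : τ.interp lam' = τ.interp lam :=
    τ.interp_eq_of_apply_vertex fun k => by simp [lam', interp_apply_vertex]
  have upper_σ : σ.IsUpper lam' := fun i => interp_σ ▸ lam'_le i
  have upper_τ : τ.IsUpper lam' := fun i => interp_τ ▸ lam'_le i
  have gap_nonneg : ∀ k ∈ univ, 0 ≤ τ.interp lam (A (σ.vertex k)) - lam (σ.vertex k) :=
    fun k _ => sub_nonneg.2 (hτ _)
  refine ⟨lam', ?_, (dist_pi_le_iff (sum_nonneg gap_nonneg)).2 fun i => ?_⟩
  · rw [upper_σ.piece_eq_parallelClassWeight, upper_τ.piece_eq_parallelClassWeight, interp_σ,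
      interp_τ]
  · by_cases hi : i ∈ σ.vertices
    · obtain ⟨k, -, rfl⟩ := mem_image.1 hi
      simp only [lam', hi, if_true, dist_comm (lam _), Real.dist_eq,
        abs_of_nonneg (gap_nonneg k (mem_univ k))]
      exact single_le_sum gap_nonneg (mem_univ k)
    · simp only [lam', hi, if_false, dist_self, sum_nonneg gap_nonneg]

lemma IsUpper.piece_le_piece_add (hτ : τ.IsUpper lam) {K : NNReal}
    (hK : ∀ σ : FullSimplex A, LipschitzWith K (σ.piece F)) (σ : FullSimplex A) :
    σ.piece F lam ≤
      τ.piece F lam + 2 * K * ∑ k, (τ.interp lam (A (σ.vertex k)) - lam (σ.vertex k)) := by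
  obtain ⟨lam', piece_eq, dist_le⟩ := hτ.exists_piece_eq_piece F σ
  calc σ.piece F lam ≤ σ.piece F lam' + K * dist lam lam' := (hK σ).le_add_mul lam lam'
    _ = τ.piece F lam' + K * dist lam lam' := by rw [piece_eq]
    _ ≤ τ.piece F lam + K * dist lam' lam + K * dist lam lam' := by
        gcongr; exact (hK τ).le_add_mul lam' lam
    _ = τ.piece F lam + 2 * K * dist lam lam' := by rw [dist_comm lam']; ring
    _ ≤ _ := by gcongr

end FullSimplex

end SimplexPieces

section Chambers

open Module Finset

variable {ι E : Type*} [NormedAddCommGroup E] [NormedSpace ℝ E]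

lemma measurableSet_isGeneric [Finite ι] [MeasurableSpace E] [BorelSpace E] (A : ι → E) :
    MeasurableSet {x | IsGeneric A x} := by
  simp only [IsGeneric, Set.ofPred_forall]
  refine MeasurableSet.iInter fun S => .imp ?_ (.const _)
  exact (AffineSubspace.closed_of_finiteDimensional (affineSpan ℝ (A '' S))).measurableSet

variable [FiniteDimensional ℝ E] {A : ι → E} {Θ : Finset (FullSimplex A)}

lemma FullSimplex.isOpen_openSimplex {σ : FullSimplex A} : IsOpen σ.openSimplex := by
  simp only [openSimplex, Set.ofPred_forall]
  exact isOpen_iInter_of_finite fun k =>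
    isOpen_lt continuous_const (σ.basis.coord k).continuous_of_finiteDimensional

/-- The generic points contained in exactly those simplices that belong to `Θ`. -/
def chamber (Θ : Finset (FullSimplex A)) : Set E :=
  {x | IsGeneric A x ∧ ∀ σ, σ ∈ Θ ↔ x ∈ σ.openSimplex}

lemma pairwise_disjoint_chamber :
    Pairwise (Function.onFun Disjoint (chamber : Finset (FullSimplex A) → Set E)) :=
  fun _ _ hne => Set.disjoint_left.2 fun _ hx hx' =>
    hne (Finset.ext fun σ => (hx.2 σ).trans (hx'.2 σ).symm)

lemma chamber_subset_convexHull (hΘ : Θ.Nonempty) :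
    chamber Θ ⊆ convexHull ℝ (Set.range A) := fun x hx => by
  obtain ⟨σ, hσ⟩ := hΘ
  exact convexHull_mono (Set.range_comp_subset_range σ.vertex A)
    (FullSimplex.mem_convexHull_of_mem_openSimplex ((hx.2 σ).1 hσ))

variable [Finite ι]

lemma IsGeneric.exists_mem_chamber {x : E} (hx : IsGeneric A x)
    (hx_hull : x ∈ convexHull ℝ (Set.range A)) :
    ∃ Θ : Finset (FullSimplex A), Θ.Nonempty ∧ x ∈ chamber Θ := by
  classical
  obtain ⟨σ, hσ⟩ := hx.exists_mem_openSimplex hx_hull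
  exact ⟨({σ | x ∈ σ.openSimplex} : Finset (FullSimplex A)), ⟨σ, (mem_filter_univ σ).2 hσ⟩, hx,
    mem_filter_univ⟩

open Classical in
/-- The affine function spanned by an upper simplex in `Θ`; the value `0` is never used, as every
nonempty chamber is covered by upper simplices. -/
noncomputable def roof (Θ : Finset (FullSimplex A)) (lam : ι → ℝ) : E →ᵃ[ℝ] ℝ :=
  if h : ∃ τ ∈ Θ, τ.IsUpper lam then h.choose.interp lam else 0

variable [MeasurableSpace E] (μ : Measure E)

open Classical in
/-- The sets of simplices whose chambers have positive measure. -/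
noncomputable def chambers (A : ι → E) : Finset (Finset (FullSimplex A)) :=
  {Θ | Θ.Nonempty ∧ μ (chamber Θ) ≠ 0}

variable {μ}

lemma mem_chambers : Θ ∈ chambers μ A ↔ Θ.Nonempty ∧ μ (chamber Θ) ≠ 0 := by
  simp [chambers]

lemma exists_roof_eq_interp (hΘ : Θ ∈ chambers μ A) (lam : ι → ℝ) :
    ∃ τ ∈ Θ, τ.IsUpper lam ∧ roof Θ lam = τ.interp lam := by
  obtain ⟨⟨σ, hσ⟩, measure_ne_zero⟩ := mem_chambers.1 hΘ
  obtain ⟨x, hx⟩ := nonempty_of_measure_ne_zero measure_ne_zero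
  have exists_isUpper : ∃ τ ∈ Θ, τ.IsUpper lam := by
    obtain ⟨τ, hxτ, hτ⟩ := hx.1.exists_isUpper ⟨σ, (hx.2 σ).1 hσ⟩ lam
    exact ⟨τ, (hx.2 τ).2 hxτ, hτ⟩
  exact ⟨_, exists_isUpper.choose_spec.1, exists_isUpper.choose_spec.2, dif_pos exists_isUpper⟩

lemma mem_convexHull_argmax_iff_of_mem_chamber (hΘ : Θ ∈ chambers μ A) {x : E} (hx : x ∈ chamber Θ)
    (lam : ι → ℝ) (γ : E →ᵃ[ℝ] ℝ) :
    x ∈ convexHull ℝ (A '' {i | ∀ j, lam j - γ (A j) ≤ lam i - γ (A i)}) ↔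
      γ ∈ parallels (roof Θ lam) := by
  obtain ⟨τ, hτΘ, hτ, roof_eq⟩ := exists_roof_eq_interp hΘ lam
  rw [roof_eq, hτ.mem_convexHull_argmax_iff ((hx.2 τ).1 hτΘ)]

lemma sSup_eq_roof_of_mem_chamber (hΘ : Θ ∈ chambers μ A) {x : E} (hx : x ∈ chamber Θ)
    (lam : ι → ℝ) :
    sSup {t : ℝ | (x, t) ∈ convexHull ℝ (Set.range fun i => (A i, lam i))} = roof Θ lam x := by
  obtain ⟨τ, hτΘ, hτ, roof_eq⟩ := exists_roof_eq_interp hΘ lam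
  rw [roof_eq, (hτ.isGreatest_interp ((hx.2 τ).1 hτΘ)).csSup_eq]

variable [BorelSpace E]

lemma measurableSet_chamber (Θ : Finset (FullSimplex A)) : MeasurableSet (chamber Θ) := by
  simp only [chamber, Set.ofPred_and, Set.ofPred_forall]
  exact (measurableSet_isGeneric A).inter <| .iInter fun σ =>
    (MeasurableSet.const _).iff FullSimplex.isOpen_openSimplex.measurableSet

lemma integrableOn_chamber_affineMap [IsFiniteMeasureOnCompacts μ] (hΘ : Θ.Nonempty)
    (γ : E →ᵃ[ℝ] ℝ) : IntegrableOn γ (chamber Θ) μ :=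
  (γ.continuous_of_finiteDimensional.continuousOn.integrableOn_compact
    ((Set.finite_range A).isCompact_convexHull ℝ)).mono_set (chamber_subset_convexHull hΘ)

lemma setIntegral_coord_pos [IsFiniteMeasureOnCompacts μ] (hΘ : Θ ∈ chambers μ A)
    {σ : FullSimplex A} (hσ : σ ∈ Θ) (k : Fin (finrank ℝ E + 1)) :
    0 < ∫ x in chamber Θ, σ.basis.coord k x ∂μ := by
  have coord_pos : ∀ x ∈ chamber Θ, 0 < σ.basis.coord k x := fun x hx => (hx.2 σ).1 hσ k
  have subset_support : chamber Θ ⊆ Function.support (σ.basis.coord k) := fun x hx =>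
    (coord_pos x hx).ne'
  rw [setIntegral_pos_iff_support_of_nonneg_ae
      (ae_restrict_of_forall_mem (measurableSet_chamber Θ) fun x hx => (coord_pos x hx).le)
      (integrableOn_chamber_affineMap (mem_chambers.1 hΘ).1 _),
    Set.inter_eq_right.2 subset_support]
  exact pos_iff_ne_zero.2 (mem_chambers.1 hΘ).2

lemma setIntegral_interp_sub [IsFiniteMeasureOnCompacts μ] (hΘ : Θ.Nonempty) (σ τ : FullSimplex A)
    (lam : ι → ℝ) :
    ∫ x in chamber Θ, τ.interp lam x ∂μ - ∫ x in chamber Θ, σ.interp lam x ∂μ =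
      ∑ k, (τ.interp lam (A (σ.vertex k)) - lam (σ.vertex k)) *
        ∫ x in chamber Θ, σ.basis.coord k x ∂μ := by
  have interp_sub : ∀ x, τ.interp lam x - σ.interp lam x =
      ∑ k, (τ.interp lam (A (σ.vertex k)) - lam (σ.vertex k)) * σ.basis.coord k x := fun x => by
    rw [← σ.interp_comp (τ.interp lam), σ.interp_apply, σ.interp_apply, ← sum_sub_distrib]
    exact sum_congr rfl fun k _ => by simp [σ.interp_comp]; ring
  rw [← integral_sub (integrableOn_chamber_affineMap hΘ _) (integrableOn_chamber_affineMap hΘ _)]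
  simp only [interp_sub]
  rw [integral_finsetSum _ fun k _ => (integrableOn_chamber_affineMap hΘ _).const_mul _]
  simp only [integral_const_mul]

lemma convexOn_setIntegral_interp [IsFiniteMeasureOnCompacts μ] (hΘ : Θ.Nonempty)
    (σ : FullSimplex A) : ConvexOn ℝ Set.univ fun lam => ∫ x in chamber Θ, σ.interp lam x ∂μ := by
  let integral : (ι → ℝ) →ₗ[ℝ] ℝ :=
    { toFun lam := ∫ x in chamber Θ, σ.interp lam x ∂μ
      map_add' lam lam' := by
        simp only [map_add, AffineMap.coe_add, Pi.add_apply]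
        exact integral_add (integrableOn_chamber_affineMap hΘ _)
          (integrableOn_chamber_affineMap hΘ _)
      map_smul' c lam := by
        simp only [map_smul, AffineMap.coe_smul, Pi.smul_apply, RingHom.id_apply]
        exact integral_smul c _ }
  exact integral.convexOn convex_univ

lemma ae_isGeneric [μ.IsAddHaarMeasure] (A : ι → E) : ∀ᵐ x ∂μ, IsGeneric A x := by
  refine ae_all_iff.2 fun S => ?_
  by_cases hS : affineSpan ℝ (A '' S) = ⊤
  · exact .of_forall fun _ _ => hS
  · filter_upwards [measure_eq_zero_iff_ae_notMem.1 (μ.addHaar_affineSubspace _ hS)] with x hx hx'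
    exact absurd hx' hx

lemma convexHull_ae_eq_biUnion_chamber [μ.IsAddHaarMeasure] (A : ι → E) :
    convexHull ℝ (Set.range A) =ᵐ[μ] ⋃ Θ ∈ chambers μ A, chamber Θ := by
  have ae_measure_ne_zero : ∀ᵐ x ∂μ, ∀ Θ : Finset (FullSimplex A), x ∈ chamber Θ →
      μ (chamber Θ) ≠ 0 := by
    refine ae_all_iff.2 fun Θ => ?_
    by_cases hΘ : μ (chamber Θ) = 0
    · filter_upwards [measure_eq_zero_iff_ae_notMem.1 hΘ] with x hx hx'
      exact absurd hx' hx
    · exact .of_forall fun _ _ => hΘ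
  filter_upwards [ae_isGeneric A, ae_measure_ne_zero] with x hx measure_ne_zero
  refine propext ⟨fun hx_hull => ?_, fun hx_mem => ?_⟩
  · obtain ⟨Θ, hΘ, hxΘ⟩ := hx.exists_mem_chamber hx_hull
    exact Set.mem_biUnion (mem_chambers.2 ⟨hΘ, measure_ne_zero Θ hxΘ⟩) hxΘ
  · obtain ⟨Θ, hΘ, hxΘ⟩ := Set.mem_iUnion₂.1 hx_mem
    exact chamber_subset_convexHull (mem_chambers.1 hΘ).1 hxΘ

lemma setIntegral_convexHull_eq_sum [μ.IsAddHaarMeasure] {f : E → ℝ}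
    {g : Finset (FullSimplex A) → E →ᵃ[ℝ] ℝ}
    (hfg : ∀ Θ ∈ chambers μ A, Set.EqOn f (g Θ) (chamber Θ)) :
    ∫ x in convexHull ℝ (Set.range A), f x ∂μ =
      ∑ Θ ∈ chambers μ A, ∫ x in chamber Θ, g Θ x ∂μ := by
  rw [setIntegral_congr_set (convexHull_ae_eq_biUnion_chamber A),
    integral_biUnion_finset _ (fun Θ _ => measurableSet_chamber Θ)
      (pairwise_disjoint_chamber.set_pairwise _)]
  · exact sum_congr rfl fun Θ hΘ => setIntegral_congr_fun (measurableSet_chamber Θ) (hfg Θ hΘ)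
  · exact fun Θ hΘ => (integrableOn_chamber_affineMap (mem_chambers.1 hΘ).1 (g Θ)).congr_fun
      (hfg Θ hΘ).symm (measurableSet_chamber Θ)

lemma measureReal_convexHull_argmax [μ.IsAddHaarMeasure] (A : ι → E) (lam : ι → ℝ)
    (γ : E →ᵃ[ℝ] ℝ) :
    μ.real (convexHull ℝ (A '' {i | ∀ j, lam j - γ (A j) ≤ lam i - γ (A i)})) =
      ∑ Θ ∈ chambers μ A, (parallels (roof Θ lam)).indicator (fun _ => μ.real (chamber Θ)) γ := by
  classical
  set H := convexHull ℝ (A '' {i | ∀ j, lam j - γ (A j) ≤ lam i - γ (A i)})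
  have measurable_H : MeasurableSet H :=
    (((Set.toFinite _).image A).isCompact_convexHull ℝ).measurableSet
  have subset_hull : H ⊆ convexHull ℝ (Set.range A) := convexHull_mono (Set.image_subset_range _ _)
  calc μ.real H = ∫ x in convexHull ℝ (Set.range A), H.indicator (fun _ => 1) x ∂μ := by
        rw [setIntegral_indicator measurable_H, Set.inter_eq_right.2 subset_hull]
        simp
    _ = ∑ Θ ∈ chambers μ A, ∫ _ in chamber Θ,
          (parallels (roof Θ lam)).indicator (fun _ => (1 : ℝ)) γ ∂μ := by
        refine setIntegral_convexHull_eq_sum (g := fun Θ => AffineMap.const ℝ E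
          ((parallels (roof Θ lam)).indicator (fun _ => 1) γ)) fun Θ hΘ x hx => ?_
        simp only [Set.indicator_apply, AffineMap.coe_const, Function.const_apply,
          mem_convexHull_argmax_iff_of_mem_chamber hΘ hx lam γ, H]
    _ = _ := sum_congr rfl fun Θ _ => by
        rw [setIntegral_const]
        simp [Set.indicator_apply]

end Chambers

section ChamberSummands

open Module Finset

variable {ι E : Type*} [Fintype ι] [DecidableEq ι] [NormedAddCommGroup E] [NormedSpace ℝ E]
  [FiniteDimensional ℝ E] [MeasurableSpace E] [BorelSpace E] {μ : Measure E}
  [IsFiniteMeasureOnCompacts μ] {A : ι → E} {F : Finset ι → ℝ} {Θ : Finset (FullSimplex A)}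

-- The gap between the interpolants of `σ` and `τ` integrates to a positive combination of the
-- heights that bound the difference of the pieces, so a large `C` outweighs that difference.
lemma exists_piece_add_le_piece_add (hF : SubmodularOnSpanning A F) (hΘ : Θ ∈ chambers μ A)
    {w : ℝ} (hw : 0 ≤ w) {σ : FullSimplex A} (hσ : σ ∈ Θ) :
    ∃ C₀ : ℝ, 0 ≤ C₀ ∧ ∀ C, C₀ ≤ C → ∀ lam (τ : FullSimplex A), τ.IsUpper lam →
      w * σ.piece F lam + C * ∫ x in chamber Θ, σ.interp lam x ∂μ ≤
        w * τ.piece F lam + C * ∫ x in chamber Θ, τ.interp lam x ∂μ := by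
  obtain ⟨K, hK⟩ := FullSimplex.exists_lipschitzWith_piece hF
  have integral_pos := setIntegral_coord_pos hΘ hσ
  have ratio_nonneg : ∀ k ∈ univ, 0 ≤ w * (2 * K) / ∫ x in chamber Θ, σ.basis.coord k x ∂μ :=
    fun k _ => div_nonneg (by positivity) (integral_pos k).le
  refine ⟨_, sum_nonneg ratio_nonneg, fun C hC lam τ hτ => ?_⟩
  have le_C_mul : ∀ k, w * (2 * K) ≤ C * ∫ x in chamber Θ, σ.basis.coord k x ∂μ := fun k =>
    (div_le_iff₀ (integral_pos k)).1 ((single_le_sum ratio_nonneg (mem_univ k)).trans hC)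
  have piece_sub_le : w * σ.piece F lam - w * τ.piece F lam ≤
      C * (∫ x in chamber Θ, τ.interp lam x ∂μ - ∫ x in chamber Θ, σ.interp lam x ∂μ) := by
    calc w * σ.piece F lam - w * τ.piece F lam = w * (σ.piece F lam - τ.piece F lam) := by ring
      _ ≤ w * (2 * K * ∑ k, (τ.interp lam (A (σ.vertex k)) - lam (σ.vertex k))) := by
          gcongr
          exact sub_le_iff_le_add'.2 (hτ.piece_le_piece_add hK σ)
      _ = ∑ k, (τ.interp lam (A (σ.vertex k)) - lam (σ.vertex k)) * (w * (2 * K)) := by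
          rw [← sum_mul]; ring
      _ ≤ ∑ k, (τ.interp lam (A (σ.vertex k)) - lam (σ.vertex k)) *
            (C * ∫ x in chamber Θ, σ.basis.coord k x ∂μ) :=
          sum_le_sum fun k _ => mul_le_mul_of_nonneg_left (le_C_mul k) (sub_nonneg.2 (hτ _))
      _ = _ := by
          rw [setIntegral_interp_sub (mem_chambers.1 hΘ).1, mul_sum]
          exact sum_congr rfl fun k _ => by ring
  linarith

theorem exists_convexOn_chamber_summand (hF : SubmodularOnSpanning A F) (hΘ : Θ ∈ chambers μ A)
    {w : ℝ} (hw : 0 ≤ w) :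
    ∃ C₀ : ℝ, 0 ≤ C₀ ∧ ∀ C, C₀ ≤ C → ConvexOn ℝ Set.univ fun lam =>
      w * parallelClassWeight F A lam (roof Θ lam) + C * ∫ x in chamber Θ, roof Θ lam x ∂μ := by
  choose! C₀ C₀_nonneg le_upper using
    fun σ (hσ : σ ∈ Θ) => exists_piece_add_le_piece_add hF hΘ hw hσ
  refine ⟨∑ σ ∈ Θ, C₀ σ, sum_nonneg C₀_nonneg, fun C hC => ?_⟩
  have C_nonneg : 0 ≤ C := (sum_nonneg C₀_nonneg).trans hC
  let f (σ : FullSimplex A) (lam : ι → ℝ) : ℝ :=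
    w * σ.piece F lam + C * ∫ x in chamber Θ, σ.interp lam x ∂μ
  have convexOn_f : ∀ σ, ConvexOn ℝ Set.univ (f σ) := fun σ =>
    ((FullSimplex.convexOn_piece hF σ).smul hw).add
      ((convexOn_setIntegral_interp (mem_chambers.1 hΘ).1 σ).smul C_nonneg)
  refine convexOn_of_isGreatest (I := {σ | σ ∈ Θ}) convex_univ (fun σ _ => convexOn_f σ)
    fun lam _ => ?_
  obtain ⟨τ, hτΘ, hτ, roof_eq⟩ := exists_roof_eq_interp hΘ lam
  rw [roof_eq, ← hτ.piece_eq_parallelClassWeight]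
  refine ⟨⟨τ, hτΘ, rfl⟩, ?_⟩
  rintro _ ⟨σ, hσ, rfl⟩
  exact le_upper σ hσ C ((single_le_sum C₀_nonneg hσ).trans hC) lam τ hτ

end ChamberSummands

lemma secondarySupport_eq_sum_chambers {n m : ℕ} (A : Fin m → Fin n → ℝ) (lam : Fin m → ℝ) :
    secondarySupport A lam = ∑ Θ ∈ chambers volume A, ∫ x in chamber Θ, roof Θ lam x :=
  setIntegral_convexHull_eq_sum fun _ hΘ _ hx => sSup_eq_roof_of_mem_chamber hΘ hx lam

open Finset in
lemma basecondary_eq_sum_chambers {n m : ℕ} (A : Fin m → Fin n → ℝ) (F : Finset (Fin m) → ℝ)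
    (lam : Fin m → ℝ) :
    basecondary A F lam = ∑ Θ ∈ chambers volume A,
      n.factorial * volume.real (chamber Θ) * parallelClassWeight F A lam (roof Θ lam) := by
  have Tterm_eq : ∀ γ, Tterm A F lam γ = ∑ Θ ∈ chambers volume A,
      n.factorial * volume.real (chamber Θ) *
        (parallels (roof Θ lam)).indicator (levelJump F A lam) γ := fun γ => by
    have volume_eq := measureReal_convexHull_argmax (μ := volume) A lam γ
    rw [Measure.real] at volume_eq
    simp only [Tterm, latticeVol, volume_eq, mul_sum]
    refine sum_congr rfl fun Θ _ => ?_
    by_cases hγ : γ ∈ parallels (roof Θ lam)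
    · simp only [Set.indicator_of_mem hγ, levelJump]
      ring
    · simp only [Set.indicator_of_notMem hγ, mul_zero]
  have finite_support : ∀ Θ : Finset (FullSimplex A),
      ((parallels (roof Θ lam)).indicator (levelJump F A lam)).HasFiniteSupport := fun Θ => by
    rw [Function.HasFiniteSupport, Set.support_indicator]
    exact finite_parallels_inter_support_levelJump
  simp only [basecondary, Tterm_eq]
  rw [finsum_sum_comm _ _ fun Θ _ => (finite_support Θ).fun_mul_right _]
  refine sum_congr rfl fun Θ _ => ?_
  rw [← finsum_mem_parallels_levelJump, finsum_mem_def, mul_finsum]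

theorem basecondary_convex_after_adding_secondary_general (n m : ℕ) (A : Fin m → Fin n → ℝ)
    (F : Finset (Fin m) → ℝ) (hF : SubmodularOnSpanning A F) :
    ∃ C₀ : ℝ, 0 ≤ C₀ ∧ ∀ C : ℝ, C₀ ≤ C →
      ConvexOn ℝ Set.univ fun lam => basecondary A F lam + C * secondarySupport A lam := by
  choose! C₀ C₀_nonneg convexOn_summand using
    fun Θ (hΘ : Θ ∈ chambers volume A) => exists_convexOn_chamber_summand hF hΘ
      (w := n.factorial * volume.real (chamber Θ)) (by positivity)
  refine ⟨∑ Θ ∈ chambers volume A, C₀ Θ, Finset.sum_nonneg C₀_nonneg, fun C hC => ?_⟩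
  simp only [basecondary_eq_sum_chambers, secondarySupport_eq_sum_chambers, Finset.mul_sum,
    ← Finset.sum_add_distrib]
  exact convexOn_finset_sum convex_univ fun Θ hΘ =>
    convexOn_summand Θ hΘ C ((Finset.single_le_sum C₀_nonneg hΘ).trans hC)

/-- If `F` is submodular on large sets, then the basecondary function becomes convex
upon adding a sufficiently large multiple of the support function of the secondary
polytope. -/
theorem basecondary_convex_after_adding_secondary (n m : ℕ) (hm : 1 < m)
    (A : Fin m → (Fin n → ℝ)) (hA : 1 ≤ n → Function.Injective A)
    (F : Finset (Fin m) → ℝ)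
    (hsub : ∀ X Y : Finset (Fin m), n ≤ (X ∩ Y).card →
      F (X ∩ Y) + F (X ∪ Y) ≤ F X + F Y) :
    ∃ C₀ : ℝ, 0 ≤ C₀ ∧ ∀ C : ℝ, C₀ ≤ C →
      ConvexOn ℝ Set.univ fun lam => basecondary A F lam + C * secondarySupport A lam := by
  refine basecondary_convex_after_adding_secondary_general n m A F fun X Y spanning => hsub X Y ?_
  simpa using (finrank_lt_card_of_affineSpan_image_eq_top spanning).le
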